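/- arXiv:math/0104099 — 2 statements merged into one kernel-verified Lean document; each statement's English description precedes it below -/
import Mathlib

section
/- In End((ℚ²)^{⊗d}) with e, f, h the sl_2-operators from the derivation action, for a, b, c ∈ ℕ with s := a+b+c-d ≥ 1 the following reduction formula holds: f^{(a)} binom(H_2, b) e^{(c)} = Σ_{k=s}^{min(a,c)} (-1)^{k-s} binom(k-1, s-1) binom(b+k, k) f^{(a-k)} binom(H_2, b+k) e^{(c-k)}, where x^{(m)} = x^m/m! and H_2 is the operator induced by E_{22}. -/
open scoped BigOperators

/-- `V^{⊗d}` for `V = ℚ^n`, modeled as functions on the basis of pure tensors. -/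
abbrev TP (n d : ℕ) : Type := (Fin d → Fin n) → ℚ

/-- The operator on `V^{⊗d}` induced (via the derivation action) by the matrix unit `E i j`. -/
noncomputable def EU (n d : ℕ) (i j : Fin n) : Module.End ℚ (TP n d) where
  toFun f := fun w => ∑ p : Fin d, if w p = i then f (Function.update w p j) else 0
  map_add' f g := by
    funext w
    simp only [Pi.add_apply]
    rw [← Finset.sum_add_distrib]
    refine Finset.sum_congr rfl fun p _ => ?_
    split <;> simp
  map_smul' c f := by
    funext w
    simp only [Pi.smul_apply, smul_eq_mul, RingHom.id_apply, Finset.mul_sum]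
    refine Finset.sum_congr rfl fun p _ => ?_
    split <;> simp

/-- The place-permutation operator on `V^{⊗d}`. -/
def permOp (n d : ℕ) (σ : Equiv.Perm (Fin d)) : Module.End ℚ (TP n d) where
  toFun f := fun w => f (w ∘ σ)
  map_add' _ _ := rfl
  map_smul' _ _ := rfl

/-- content (weight) of a basis tensor -/
def content (n d : ℕ) (w : Fin d → Fin n) : Fin n → ℕ :=
  fun k => (Finset.univ.filter (fun p => w p = k)).card

/-- projection onto the span of basis tensors of content `μ` -/
noncomputable def proj (n d : ℕ) (μ : Fin n → ℕ) : Module.End ℚ (TP n d) where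
  toFun f := fun w => if content n d w = μ then f w else 0
  map_add' f g := by funext w; by_cases h : content n d w = μ <;> simp [h]
  map_smul' c f := by funext w; by_cases h : content n d w = μ <;> simp [h]

/-- the set `Λ(n,d)` of `n`-part compositions of `d`, as a finset of `ℕ^n` -/
def Lam (n d : ℕ) : Finset (Fin n → ℕ) :=
  ((Finset.univ : Finset (Fin n → Fin (d+1))).image (fun μ k => (μ k : ℕ))).filter
    (fun lam => ∑ k, lam k = d)

/-- `binom(A, m) = A(A-1)⋯(A-m+1)/m!` for an operator `A` -/
noncomputable def binomOp {M : Type*} [AddCommGroup M] [Module ℚ M]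
    (A : Module.End ℚ M) (m : ℕ) : Module.End ℚ M :=
  (m.factorial : ℚ)⁻¹ • Polynomial.aeval A (descPochhammer ℚ m)

/-- divided power `A^{(m)} = A^m/m!` -/
noncomputable def dpow {M : Type*} [AddCommGroup M] [Module ℚ M]
    (A : Module.End ℚ M) (m : ℕ) : Module.End ℚ M :=
  (m.factorial : ℚ)⁻¹ • A ^ m

/-!
Expand operators on `V^{⊗d}` in matrix entries indexed by pairs of words `(w, u)`. The entry of
`f^{(a)} binom(H_j, b) e^{(c)}` is a sum over the words `v` reached from `w` by turning `a` letters
`j` into `i`, from which `u` is reached by turning `c` letters `i` into `j`. Such a `v` amounts to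
a set of `k` *detours*, positions changed from `j` to `i` and back, chosen among the `m` positions
where `w` and `u` both carry `j`; here `k` is determined by `a`, `w` and `u`, so the entry is
`binom(m, k) binom(m - k, b)`. Replacing `(a, b, c)` by `(a - l, b + l, c - l)` replaces `k` by
`k - l`, and after multiplication by `binom(b + l, l)` the entry becomes
`binom(m, k) binom(m - k, b) binom(k, l)`. The reduction formula is thus the identity
`∑ l ≥ s, (-1)^(l-s) binom(l-1, s-1) binom(k, l) = 1` for `1 ≤ s ≤ k`, multiplied by
`binom(m, k) binom(m - k, b)`. Since there are only `d` positions, this factor is zero unless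
`s ≤ k`.
-/

open Finset in
theorem sum_range_alternating_choose_mul_choose (r n : ℕ) :
    ∑ l ∈ range (n + 1), (-1 : ℤ) ^ l * (r + l).choose r * (r + n).choose (r + l) =
      if n = 0 then 1 else 0 := by
  have hterm (l : ℕ) : (-1 : ℤ) ^ l * (r + l).choose r * (r + n).choose (r + l) =
      (r + n).choose r * ((-1) ^ l * n.choose l) := by
    have h := Nat.choose_mul (n := r + n) (Nat.le_add_right r l)
    rw [Nat.add_sub_cancel_left, Nat.add_sub_cancel_left] at h
    zify at h
    linear_combination (-1 : ℤ) ^ l * h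
  simp only [hterm]
  rw [← mul_sum, Int.alternating_sum_range_choose]
  split_ifs with hn <;> simp [hn]

open Finset in
theorem sum_range_alternating_choose_mul_choose_succ (r n : ℕ) :
    ∑ l ∈ range (n + 1), (-1 : ℤ) ^ l * (r + l).choose r * (r + n + 1).choose (r + l + 1) = 1 := by
  induction n with
  | zero => simp
  | succ n ih =>
    have hlast : (r + (n + 1)).choose (r + (n + 1) + 1) = 0 := Nat.choose_succ_self _
    simp only [Nat.choose_succ_succ (r + (n + 1)), Nat.cast_add, mul_add, sum_add_distrib]
    rw [sum_range_alternating_choose_mul_choose, if_neg n.succ_ne_zero, zero_add, sum_range_succ,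
      hlast, Nat.cast_zero, mul_zero, add_zero]
    exact ih

open Finset in
theorem sum_Icc_alternating_choose_mul_choose {s k M : ℕ} (hs : 0 < s) (hsk : s ≤ k)
    (hkM : k ≤ M) :
    ∑ l ∈ Icc s M, (-1 : ℤ) ^ (l - s) * (l - 1).choose (s - 1) * k.choose l = 1 := by
  obtain ⟨r, rfl⟩ : ∃ r, s = r + 1 := ⟨s - 1, by omega⟩
  obtain ⟨n, rfl⟩ : ∃ n, k = r + n + 1 := ⟨k - (r + 1), by omega⟩
  have hvanish : ∀ l ∈ Icc (r + 1) M, l ∉ Icc (r + 1) (r + n + 1) →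
      (-1 : ℤ) ^ (l - (r + 1)) * (l - 1).choose (r + 1 - 1) * (r + n + 1).choose l = 0 := by
    intro l hl hl'
    simp only [mem_Icc] at hl hl'
    rw [Nat.choose_eq_zero_of_lt (by omega : r + n + 1 < l), Nat.cast_zero, mul_zero]
  rw [← sum_subset (Icc_subset_Icc_right hkM) hvanish, ← Ico_add_one_right_eq_Icc,
    sum_Ico_eq_sum_range, show r + n + 1 + 1 - (r + 1) = n + 1 by omega]
  refine Eq.trans (sum_congr rfl fun l _ => ?_) (sum_range_alternating_choose_mul_choose_succ r n)
  rw [Nat.add_sub_cancel_left, Nat.add_right_comm r 1 l, Nat.add_sub_cancel, Nat.add_sub_cancel]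

theorem choose_mul_choose_mul_choose_sub (m b : ℕ) {k l : ℕ} (hl : l ≤ k) :
    (b + l).choose l * (m.choose (k - l) * (m - (k - l)).choose (b + l)) =
      m.choose k * (m - k).choose b * k.choose l := by
  have hbl := Nat.choose_mul (n := m - (k - l)) (Nat.le_add_left l b)
  have hkl := Nat.choose_mul (n := m) (Nat.sub_le k l)
  rw [Nat.add_sub_cancel, Nat.sub_sub, Nat.sub_add_cancel hl] at hbl
  rw [Nat.sub_sub_self hl, Nat.choose_symm hl] at hkl
  calc
    _ = m.choose (k - l) * ((m - (k - l)).choose (b + l) * (b + l).choose l) := by ring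
    _ = m.choose (k - l) * (m - (k - l)).choose l * (m - k).choose b := by rw [hbl]; ring
    _ = _ := by rw [← hkl]; ring

theorem choose_mul_choose_sub_eq_zero {m b k : ℕ} (h : m < k + b) :
    m.choose k * (m - k).choose b = 0 := by
  rcases lt_or_ge m k with hk | hk
  · rw [Nat.choose_eq_zero_of_lt hk, zero_mul]
  · rw [Nat.choose_eq_zero_of_lt (by omega : m - k < b), mul_zero]

section Words

open Finset Function

variable {α ι : Type*} [Fintype α] [DecidableEq ι] {i j : ι} {a c : ℕ} {w v u : α → ι}

/-- `IsLetterChange i j c w u` says that the word `u` arises from the word `w` by turning exactly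
`c` of its letters `i` into `j`. -/
def IsLetterChange (i j : ι) (c : ℕ) (w u : α → ι) : Prop :=
  (∀ p, w p ≠ u p → w p = i ∧ u p = j) ∧ hammingDist w u = c

instance (i j : ι) (c : ℕ) (w u : α → ι) : Decidable (IsLetterChange i j c w u) :=
  inferInstanceAs (Decidable (_ ∧ _))

theorem isLetterChange_comm : IsLetterChange i j c w u ↔ IsLetterChange j i c u w := by
  simp only [IsLetterChange, hammingDist_comm w u, ne_comm (a := w _), and_comm (a := w _ = i)]

theorem isLetterChange_zero_iff : IsLetterChange i j 0 w u ↔ w = u := by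
  rw [IsLetterChange, hammingDist_eq_zero, and_iff_right_iff_imp]
  rintro rfl p hp
  exact absurd rfl hp

theorem hammingDist_update_add_one [DecidableEq α] {p : α} (hp : w p ≠ u p) :
    hammingDist (update w p (u p)) u + 1 = hammingDist w u := by
  have herase : ({q | update w p (u p) q ≠ u q} : Finset α) =
      ({q | w q ≠ u q} : Finset α).erase p := by
    ext q
    by_cases hq : q = p <;> simp [update_apply, hq]
  rw [hammingDist, hammingDist, herase, card_erase_add_one (by simpa using hp)]

theorem isLetterChange_update_iff [DecidableEq α] (hij : i ≠ j) {p : α} :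
    w p = i ∧ IsLetterChange i j c (update w p j) u ↔
      IsLetterChange i j (c + 1) w u ∧ w p ≠ u p := by
  constructor
  · rintro ⟨hwp, hchange, hdist⟩
    have hup : u p = j := by
      by_contra hup
      have hji := (hchange p (by simpa using Ne.symm hup)).1
      exact hij (by simpa using hji.symm)
    have hp : w p ≠ u p := by rwa [hwp, hup]
    refine ⟨⟨fun q hq => ?_, by rw [← hammingDist_update_add_one hp, hup, hdist]⟩, hp⟩
    rcases eq_or_ne q p with rfl | hqp
    · exact ⟨hwp, hup⟩
    · simpa [hqp] using hchange q (by simpa [hqp] using hq)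
  · rintro ⟨⟨hchange, hdist⟩, hp⟩
    obtain ⟨hwp, hup⟩ := hchange p hp
    have hadd := hammingDist_update_add_one hp
    rw [hup] at hadd
    refine ⟨hwp, fun q hq => ?_, by omega⟩
    rcases eq_or_ne q p with rfl | hqp
    · simp [hup] at hq
    · simpa [hqp] using hchange q (by simpa [hqp] using hq)

theorem isLetterChange_one_iff [DecidableEq α] (hij : i ≠ j) :
    IsLetterChange i j 1 w u ↔ ∃ p, w p = i ∧ update w p j = u := by
  simp only [← isLetterChange_zero_iff (i := i) (j := j), isLetterChange_update_iff hij,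
    exists_and_left, ← ne_iff, zero_add]
  exact (and_iff_left_of_imp fun h => hammingDist_pos.1 (h.2.symm ▸ one_pos)).symm

/-- The number of positions at which the words `w` and `u` carry the letters `i` and `j`. -/
def pairCount (i j : ι) (w u : α → ι) : ℕ :=
  #{p | w p = i ∧ u p = j}

theorem pairCount_comm (i j : ι) (w u : α → ι) : pairCount i j w u = pairCount j i u w := by
  simp only [pairCount, and_comm]

theorem pairCount_add_pairCount_add_pairCount_le (hij : i ≠ j) (w u : α → ι) :
    pairCount j i w u + pairCount i j w u + pairCount j j w u ≤ Fintype.card α := by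
  classical
  simp only [pairCount]
  rw [← card_union_of_disjoint, ← card_union_of_disjoint]
  · exact card_le_univ _
  · simp only [disjoint_left, mem_union, mem_filter, mem_univ, true_and]
    grind
  · exact disjoint_filter.2 fun p _ h h' => hij (h'.1.symm.trans h.1)

/-- The relation between words that can be obtained from each other by changing some letters `i`
into `j` and some letters `j` into `i`. -/
def IsExchange (i j : ι) (w u : α → ι) : Prop :=
  ∀ p, w p ≠ u p → (w p = i ∧ u p = j) ∨ (w p = j ∧ u p = i)

/-- The positions whose letter is changed from `j` to `i` and back along `w → v → u`. -/
def detours (i j : ι) (w v u : α → ι) : Finset α :=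
  {p | w p = j ∧ v p = i ∧ u p = j}

/-- The word `v` along which the exchange `w → v → u` has `K` as its set of detours. -/
def detourWord [DecidableEq α] (i j : ι) (w u : α → ι) (K : Finset α) : α → ι :=
  fun p => if p ∈ K then i else if w p = j then u p else w p

theorem detours_comm (i j : ι) (w v u : α → ι) : detours i j w v u = detours i j u v w := by
  ext p
  simp only [detours, mem_filter]
  tauto

theorem IsLetterChange.isExchange (hwv : IsLetterChange j i a w v)
    (hvu : IsLetterChange i j c v u) : IsExchange i j w u := by
  intro p hp
  have hw := hwv.1 p
  have hu := hvu.1 p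
  rcases eq_or_ne (w p) (v p) <;> grind

theorem IsLetterChange.eq_pairCount_add_card_detours_left (hij : i ≠ j)
    (hwv : IsLetterChange j i a w v) (hvu : IsLetterChange i j c v u) :
    a = pairCount j i w u + #(detours i j w v u) := by
  classical
  rw [← hwv.2, hammingDist, pairCount, detours, ← card_union_of_disjoint]
  · congr 1
    ext p
    have hw := hwv.1 p
    have hu := hvu.1 p
    simp only [mem_filter, mem_univ, true_and, mem_union]
    grind
  · exact disjoint_filter.2 fun p _ h h' => hij (h.2.symm.trans h'.2.2)

theorem IsLetterChange.eq_pairCount_add_card_detours_right (hij : i ≠ j)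
    (hwv : IsLetterChange j i a w v) (hvu : IsLetterChange i j c v u) :
    c = pairCount i j w u + #(detours i j w v u) := by
  rw [pairCount_comm, detours_comm]
  exact (isLetterChange_comm.1 hvu).eq_pairCount_add_card_detours_left hij
    (isLetterChange_comm.1 hwv)

theorem IsLetterChange.card_letter_add_card_detours (hij : i ≠ j)
    (hwv : IsLetterChange j i a w v) (hvu : IsLetterChange i j c v u) :
    #{p | v p = j} + #(detours i j w v u) = pairCount j j w u := by
  classical
  rw [pairCount, detours, ← card_union_of_disjoint]
  · congr 1
    ext p
    have hw := hwv.1 p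
    have hu := hvu.1 p
    simp only [mem_filter, mem_univ, true_and, mem_union]
    grind
  · exact disjoint_filter.2 fun p _ h h' => hij (h'.2.1.symm.trans h)

variable [DecidableEq α] {K : Finset α}

theorem IsLetterChange.detourWord_detours (hwv : IsLetterChange j i a w v)
    (hvu : IsLetterChange i j c v u) : detourWord i j w u (detours i j w v u) = v := by
  ext p
  have hw := hwv.1 p
  have hu := hvu.1 p
  grind [detourWord, detours]

theorem detours_detourWord (hij : i ≠ j) (hK : ∀ p ∈ K, w p = j ∧ u p = j) :
    detours i j w (detourWord i j w u K) u = K := by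
  ext p
  grind [detourWord, detours]

theorem IsExchange.isLetterChange_detourWord (hij : i ≠ j) (h : IsExchange i j w u)
    (hK : ∀ p ∈ K, w p = j ∧ u p = j) :
    IsLetterChange j i (pairCount j i w u + #K) w (detourWord i j w u K) ∧
      IsLetterChange i j (pairCount i j w u + #K) (detourWord i j w u K) u := by
  set v := detourWord i j w u K
  have hwv : IsLetterChange j i (hammingDist w v) w v := ⟨by grind [IsExchange, detourWord], rfl⟩
  have hvu : IsLetterChange i j (hammingDist v u) v u := ⟨by grind [IsExchange, detourWord], rfl⟩
  have hleft := hwv.eq_pairCount_add_card_detours_left hij hvu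
  have hright := hwv.eq_pairCount_add_card_detours_right hij hvu
  rw [detours_detourWord hij hK] at hleft hright
  exact ⟨hleft ▸ hwv, hright ▸ hvu⟩

theorem IsExchange.card_filter_isLetterChange [Fintype ι] (hij : i ≠ j) (h : IsExchange i j w u)
    (k : ℕ) :
    #{v | IsLetterChange j i (pairCount j i w u + k) w v ∧
      IsLetterChange i j (pairCount i j w u + k) v u} = (pairCount j j w u).choose k := by
  change _ = (#{p | w p = j ∧ u p = j}).choose k
  have hcommon {K : Finset α} (hK : K ∈ powersetCard k {p | w p = j ∧ u p = j}) :
      ∀ p ∈ K, w p = j ∧ u p = j :=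
    fun p hp => (mem_filter.1 ((mem_powersetCard.1 hK).1 hp)).2
  rw [← card_powersetCard]
  refine card_nbij' (fun v => detours i j w v u) (detourWord i j w u) ?_ ?_ ?_ ?_
  · intro v hv
    obtain ⟨hwv, hvu⟩ := (mem_filter.1 hv).2
    have hsubset : detours i j w v u ⊆ ({p | w p = j ∧ u p = j} : Finset α) :=
      monotone_filter_right _ fun p _ hp => ⟨hp.1, hp.2.2⟩
    have hcard := hwv.eq_pairCount_add_card_detours_left hij hvu
    exact mem_powersetCard.2 ⟨hsubset, (Nat.add_left_cancel hcard).symm⟩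
  · intro K hK
    have hchange := h.isLetterChange_detourWord hij (hcommon hK)
    rw [(mem_powersetCard.1 hK).2] at hchange
    exact mem_filter.2 ⟨mem_univ _, hchange⟩
  · intro v hv
    obtain ⟨hwv, hvu⟩ := (mem_filter.1 hv).2
    exact hwv.detourWord_detours hvu
  · intro K hK
    exact detours_detourWord hij (hcommon hK)

end Words

section WordMatrices

open Finset Matrix Function

variable {α ι R : Type*} [Fintype α] [DecidableEq ι] {i j : ι} {w u : α → ι}

variable (α R) in
/-- The matrix over words of the divided power `E_{ij}^{(c)}`, `i ≠ j`: its entry at `(w, u)`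
indicates that `u` arises from `w` by turning `c` letters `i` into `j`. -/
def letterChange [Zero R] [One R] (i j : ι) (c : ℕ) : Matrix (α → ι) (α → ι) R :=
  of fun w u => if IsLetterChange i j c w u then 1 else 0

variable [DecidableEq α]

variable (α R) in
/-- The matrix over words of `binom(H_j, b)`, where `H_j = E_{jj}` counts the letters `j`. -/
def letterBinom [NatCast R] [Zero R] (j : ι) (b : ℕ) : Matrix (α → ι) (α → ι) R :=
  diagonal fun w => ((#{p | w p = j}).choose b : R)

variable [Fintype ι]

theorem letterChange_one_mulVec [NonAssocSemiring R] (hij : i ≠ j) (g : (α → ι) → R)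
    (w : α → ι) :
    (letterChange α R i j 1 *ᵥ g) w = ∑ p with w p = i, g (update w p j) := by
  have himage : ({u | IsLetterChange i j 1 w u} : Finset (α → ι)) =
      ({p | w p = i} : Finset α).image fun p => update w p j := by
    ext u
    simp [isLetterChange_one_iff hij]
  simp only [letterChange, mulVec, dotProduct, of_apply, ite_mul, one_mul, zero_mul]
  rw [← sum_filter, himage, sum_image]
  intro p hp q _ hpq
  by_contra hne
  have hwp : update w p j p = update w q j p := congrFun hpq p
  rw [update_self, update_of_ne hne] at hwp
  exact hij ((mem_filter.1 hp).2.symm.trans hwp.symm)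

theorem letterChange_one_mul [NonAssocSemiring R] (hij : i ≠ j) (c : ℕ) :
    letterChange α R i j 1 * letterChange α R i j c = (c + 1) • letterChange α R i j (c + 1) := by
  ext w u
  change (letterChange α R i j 1 *ᵥ fun v => letterChange α R i j c v u) w = _
  rw [letterChange_one_mulVec hij]
  simp only [letterChange, of_apply, Matrix.smul_apply]
  rw [sum_boole, filter_filter]
  simp only [isLetterChange_update_iff hij]
  split_ifs with h
  · simp only [h, true_and, nsmul_one]
    exact congrArg _ h.2
  · simp [h]

theorem letterChange_one_pow [Semiring R] (hij : i ≠ j) (c : ℕ) :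
    letterChange α R i j 1 ^ c = c.factorial • letterChange α R i j c := by
  induction c with
  | zero =>
    ext w u
    simp [letterChange, one_apply, isLetterChange_zero_iff]
  | succ c ih =>
    rw [pow_succ', ih, mul_smul_comm, letterChange_one_mul hij, smul_smul, Nat.factorial_succ,
      mul_comm]

theorem letterBinom_one_mulVec [NonAssocSemiring R] (j : ι) (g : (α → ι) → R) (w : α → ι) :
    (letterBinom α R j 1 *ᵥ g) w = ∑ p with w p = j, g (update w p j) := by
  have hupdate : ∀ p ∈ ({p | w p = j} : Finset α), g (update w p j) = g w := by
    intro p hp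
    rw [← (mem_filter.1 hp).2, update_eq_self]
  rw [sum_congr rfl hupdate, letterBinom, mulVec_diagonal, Nat.choose_one_right, sum_const,
    nsmul_eq_mul]

theorem aeval_letterBinom_one [CommRing R] (j : ι) (b : ℕ) :
    Polynomial.aeval (letterBinom α R j 1) (descPochhammer R b) =
      b.factorial • letterBinom α R j b := by
  have hdiag : letterBinom α R j 1 =
      diagonalAlgHom R fun w : α → ι => (#{p | w p = j} : R) := by
    simp [letterBinom]
  rw [hdiag, Polynomial.aeval_algHom_apply, Polynomial.aeval_pi_apply]
  simp only [diagonalAlgHom_apply, Polynomial.coe_aeval_eq_eval, letterBinom, ← diagonal_smul,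
    descPochhammer_eval_eq_descFactorial, Nat.descFactorial_eq_factorial_mul_choose]
  congr 1
  ext w
  simp

variable (α R) in
/-- The matrix over words of `f^{(a)} binom(H_j, b) e^{(c)}` with `e = E_{ij}`, `f = E_{ji}`. -/
def pbwMatrix [Semiring R] (i j : ι) (a b c : ℕ) : Matrix (α → ι) (α → ι) R :=
  letterChange α R j i a * letterBinom α R j b * letterChange α R i j c

theorem pbwMatrix_apply [Semiring R] (i j : ι) (a b c : ℕ) (w u : α → ι) :
    pbwMatrix α R i j a b c w u = ∑ v with IsLetterChange j i a w v ∧ IsLetterChange i j c v u,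
      ((#{p | v p = j}).choose b : R) := by
  rw [pbwMatrix, mul_apply, sum_filter]
  refine sum_congr rfl fun v _ => ?_
  rw [letterBinom, mul_diagonal]
  simp only [letterChange, of_apply, ite_mul, one_mul, zero_mul, mul_ite, mul_one, mul_zero,
    ite_and]
  split_ifs <;> rfl

theorem pbwMatrix_apply_of_isExchange [Semiring R] (hij : i ≠ j) (h : IsExchange i j w u)
    (b k : ℕ) :
    pbwMatrix α R i j (pairCount j i w u + k) b (pairCount i j w u + k) w u =
      ((pairCount j j w u).choose k * (pairCount j j w u - k).choose b : ℕ) := by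
  rw [pbwMatrix_apply, ← h.card_filter_isLetterChange hij, Nat.cast_mul, ← nsmul_eq_mul,
    ← sum_const]
  refine sum_congr rfl fun v hv => ?_
  obtain ⟨hwv, hvu⟩ := (mem_filter.1 hv).2
  have hleft := hwv.eq_pairCount_add_card_detours_left hij hvu
  have hcard := hwv.card_letter_add_card_detours hij hvu
  congr 2
  omega

theorem exists_of_pbwMatrix_apply_ne_zero [Semiring R] (hij : i ≠ j) {a b c : ℕ}
    (h : pbwMatrix α R i j a b c w u ≠ 0) :
    IsExchange i j w u ∧ ∃ k, a = pairCount j i w u + k ∧ c = pairCount i j w u + k := by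
  rw [pbwMatrix_apply] at h
  obtain ⟨v, hv, -⟩ := exists_ne_zero_of_sum_ne_zero h
  obtain ⟨hwv, hvu⟩ := (mem_filter.1 hv).2
  exact ⟨hwv.isExchange hvu, _, hwv.eq_pairCount_add_card_detours_left hij hvu,
    hwv.eq_pairCount_add_card_detours_right hij hvu⟩

theorem choose_mul_pbwMatrix_apply [Semiring R] (hij : i ≠ j) (h : IsExchange i j w u)
    (b : ℕ) {a c k l : ℕ} (ha : a = pairCount j i w u + k) (hc : c = pairCount i j w u + k)
    (hl : l ≤ a) :
    ((b + l).choose l : R) * pbwMatrix α R i j (a - l) (b + l) (c - l) w u =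
      ((pairCount j j w u).choose k * (pairCount j j w u - k).choose b * k.choose l : ℕ) := by
  rcases le_or_gt l k with hlk | hkl
  · rw [ha, hc, Nat.add_sub_assoc hlk, Nat.add_sub_assoc hlk, pbwMatrix_apply_of_isExchange hij h,
      ← Nat.cast_mul, choose_mul_choose_mul_choose_sub _ b hlk]
  · have hzero : pbwMatrix α R i j (a - l) (b + l) (c - l) w u = 0 := by
      by_contra hne
      obtain ⟨-, k', hk', -⟩ := exists_of_pbwMatrix_apply_ne_zero hij hne
      omega
    rw [hzero, Nat.choose_eq_zero_of_lt hkl, mul_zero, mul_zero, Nat.cast_zero]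

theorem pbwMatrix_apply_reduction [CommRing R] (hij : i ≠ j) (h : IsExchange i j w u)
    {s a b c k : ℕ} (hs : 0 < s) (hsum : s + Fintype.card α ≤ a + b + c)
    (ha : a = pairCount j i w u + k) (hc : c = pairCount i j w u + k) :
    pbwMatrix α R i j a b c w u =
      ∑ l ∈ Icc s (min a c), (-1 : R) ^ (l - s) * (l - 1).choose (s - 1) * (b + l).choose l *
        pbwMatrix α R i j (a - l) (b + l) (c - l) w u := by
  set m := pairCount j j w u
  have hcard : pairCount j i w u + pairCount i j w u + m ≤ Fintype.card α :=
    pairCount_add_pairCount_add_pairCount_le hij w u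
  have hterm : ∀ l ∈ Icc s (min a c),
      (-1 : R) ^ (l - s) * (l - 1).choose (s - 1) * (b + l).choose l *
        pbwMatrix α R i j (a - l) (b + l) (c - l) w u =
      (m.choose k * (m - k).choose b : ℕ) *
        ((-1 : ℤ) ^ (l - s) * (l - 1).choose (s - 1) * k.choose l : ℤ) := by
    intro l hl
    rw [mul_assoc,
      choose_mul_pbwMatrix_apply hij h b ha hc ((mem_Icc.1 hl).2.trans (min_le_left a c))]
    push_cast
    ring
  rw [sum_congr rfl hterm, ← mul_sum, ← Int.cast_sum, ha, hc, pbwMatrix_apply_of_isExchange hij h]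
  rcases lt_or_ge m (k + b) with hm | hm
  · rw [choose_mul_choose_sub_eq_zero hm, Nat.cast_zero, zero_mul]
  · rw [sum_Icc_alternating_choose_mul_choose hs (by omega) (by omega), Int.cast_one, mul_one]

theorem pbwMatrix_reduction [CommRing R] (hij : i ≠ j) {s a b c : ℕ} (hs : 0 < s)
    (hsum : s + Fintype.card α ≤ a + b + c) :
    pbwMatrix α R i j a b c =
      ∑ l ∈ Icc s (min a c), ((-1 : R) ^ (l - s) * (l - 1).choose (s - 1) * (b + l).choose l) •
        pbwMatrix α R i j (a - l) (b + l) (c - l) := by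
  ext w u
  simp only [Matrix.sum_apply, Matrix.smul_apply, smul_eq_mul]
  by_cases h : IsExchange i j w u ∧ ∃ k, a = pairCount j i w u + k ∧ c = pairCount i j w u + k
  · obtain ⟨hwu, k, ha, hc⟩ := h
    exact pbwMatrix_apply_reduction hij hwu hs hsum ha hc
  · rw [not_imp_comm.1 (exists_of_pbwMatrix_apply_ne_zero hij) h, eq_comm]
    refine sum_eq_zero fun l hl => ?_
    rw [not_imp_comm.1 (exists_of_pbwMatrix_apply_ne_zero hij), mul_zero]
    rintro ⟨hwu, k, ha, hc⟩
    rw [mem_Icc] at hl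
    exact h ⟨hwu, k + l, by omega, by omega⟩

end WordMatrices

section TensorPower

open Finset Matrix

variable {n d : ℕ} {i j : Fin n}

theorem EU_apply (i j : Fin n) (g : TP n d) (w : Fin d → Fin n) :
    EU n d i j g w = ∑ p with w p = i, g (Function.update w p j) := by
  rw [sum_filter]
  rfl

theorem toLinAlgEquiv'_letterChange_one (hij : i ≠ j) :
    toLinAlgEquiv' (letterChange (Fin d) ℚ i j 1) = EU n d i j := by
  refine LinearMap.ext fun g => funext fun w => ?_
  rw [toLinAlgEquiv'_apply, letterChange_one_mulVec hij, EU_apply]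

theorem toLinAlgEquiv'_letterBinom_one (j : Fin n) :
    toLinAlgEquiv' (letterBinom (Fin d) ℚ j 1) = EU n d j j := by
  refine LinearMap.ext fun g => funext fun w => ?_
  rw [toLinAlgEquiv'_apply, letterBinom_one_mulVec, EU_apply]

theorem inv_factorial_smul_factorial_smul {M : Type*} [AddCommGroup M] [Module ℚ M] (m : ℕ)
    (x : M) : (m.factorial : ℚ)⁻¹ • m.factorial • x = x := by
  rw [← Nat.cast_smul_eq_nsmul ℚ, inv_smul_smul₀ (Nat.cast_ne_zero.2 m.factorial_ne_zero)]

theorem dpow_EU (hij : i ≠ j) (c : ℕ) :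
    dpow (EU n d i j) c = toLinAlgEquiv' (letterChange (Fin d) ℚ i j c) := by
  rw [dpow, ← toLinAlgEquiv'_letterChange_one hij, ← map_pow, letterChange_one_pow hij, map_nsmul,
    inv_factorial_smul_factorial_smul]

theorem binomOp_EU_self (j : Fin n) (b : ℕ) :
    binomOp (EU n d j j) b = toLinAlgEquiv' (letterBinom (Fin d) ℚ j b) := by
  rw [binomOp, ← toLinAlgEquiv'_letterBinom_one, Polynomial.aeval_algHom_apply,
    aeval_letterBinom_one, map_nsmul, inv_factorial_smul_factorial_smul]

theorem dpow_mul_binomOp_mul_dpow (hij : i ≠ j) (a b c : ℕ) :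
    dpow (EU n d j i) a * binomOp (EU n d j j) b * dpow (EU n d i j) c =
      toLinAlgEquiv' (pbwMatrix (Fin d) ℚ i j a b c) := by
  rw [dpow_EU hij.symm, binomOp_EU_self, dpow_EU hij, pbwMatrix, map_mul, map_mul]

theorem reduction_formula_classical_general (hij : i ≠ j) {s a b c : ℕ} (hs : 0 < s)
    (hsum : s + d ≤ a + b + c) :
    dpow (EU n d j i) a * binomOp (EU n d j j) b * dpow (EU n d i j) c =
      ∑ k ∈ Icc s (min a c),
        ((-1 : ℚ) ^ (k - s) * (k - 1).choose (s - 1) * (b + k).choose k) •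
          (dpow (EU n d j i) (a - k) * binomOp (EU n d j j) (b + k) *
            dpow (EU n d i j) (c - k)) := by
  simp only [dpow_mul_binomOp_mul_dpow hij, ← map_smul, ← map_sum]
  rw [pbwMatrix_reduction hij hs (by simpa using hsum)]

end TensorPower

/-- The reduction formula
`f^{(a)} binom(H₂,b) e^{(c)} = Σ_{k=s}^{min(a,c)} (-1)^{k-s} binom(k-1,s-1) binom(b+k,k)
f^{(a-k)} binom(H₂,b+k) e^{(c-k)}` in `End((ℚ²)^{⊗d})`, where `s = a+b+c-d ≥ 1`,
`e = E_{12}`, `f = E_{21}`, `H₂ = E_{22}`. -/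
theorem reduction_formula_classical (d a b c : ℕ) (hs : d < a + b + c) :
    dpow (EU 2 d 1 0) a * binomOp (EU 2 d 1 1) b * dpow (EU 2 d 0 1) c =
      ∑ k ∈ Finset.Icc (a + b + c - d) (min a c),
        (((-1 : ℚ) ^ (k - (a + b + c - d)) * (Nat.choose (k - 1) (a + b + c - d - 1)) *
            (Nat.choose (b + k) k)) •
          (dpow (EU 2 d 1 0) (a - k) * binomOp (EU 2 d 1 1) (b + k) *
            dpow (EU 2 d 0 1) (c - k))) :=
  reduction_formula_classical_general (by decide) (by omega) (by omega)
end

section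
/- Let B ∈ ℕ^n with |B| > d. Then in End(V^{⊗d}) (V = ℚ^n, gl_n derivation action), the operator H_B := Π_{k=1}^n binom(H_k, b_k) is zero, where H_k is the operator induced by E_{kk} and binom(H, m) = H(H-1)···(H-m+1)/m!. -/
open scoped BigOperators

/-!
`H_k` multiplies a pure tensor by the number of its factors equal to the `k`-th basis vector, that
is, by the `k`-th entry of its content. Under `Algebra.lmul`, which embeds the algebra of
functions on words as the diagonal operators, `H_B` is therefore the function
`∏ k, (content k).choose (B k)`. The entries of a content sum to `d < ∑ k, B k`, so some factor of
this product vanishes at every word.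
-/

theorem prod_choose_eq_zero_of_sum_lt_sum {ι : Type*} {s : Finset ι} {a b : ι → ℕ}
    (h : ∑ i ∈ s, a i < ∑ i ∈ s, b i) : ∏ i ∈ s, (a i).choose (b i) = 0 := by
  obtain ⟨i, hi, hlt⟩ := Finset.exists_lt_of_sum_lt h
  exact Finset.prod_eq_zero hi (Nat.choose_eq_zero_of_lt hlt)

theorem binomOp_map {A M : Type*} [Semiring A] [Algebra ℚ A] [AddCommGroup M] [Module ℚ M]
    (φ : A →ₐ[ℚ] Module.End ℚ M) (a : A) (m : ℕ) :
    binomOp (φ a) m = φ ((m.factorial : ℚ)⁻¹ • Polynomial.aeval a (descPochhammer ℚ m)) := by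
  rw [binomOp, Polynomial.aeval_algHom_apply, map_smul]

theorem inv_factorial_smul_aeval_descPochhammer_natCast {K ι : Type*} [Field K] [CharZero K]
    (a : ι → ℕ) (m : ℕ) :
    (m.factorial : K)⁻¹ • Polynomial.aeval (fun i => (a i : K)) (descPochhammer K m) =
      fun i => ((a i).choose m : K) := by
  funext i
  simp [Polynomial.aeval_fn_apply, Nat.cast_choose_eq_descPochhammer_div, div_eq_inv_mul]

theorem binomOp_lmul_natCast {ι : Type*} (a : ι → ℕ) (m : ℕ) :
    binomOp (Algebra.lmul ℚ (ι → ℚ) fun i => (a i : ℚ)) m =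
      Algebra.lmul ℚ (ι → ℚ) fun i => ((a i).choose m : ℚ) := by
  rw [binomOp_map, inv_factorial_smul_aeval_descPochhammer_natCast]

theorem EU_self_eq_lmul_content (n d : ℕ) (k : Fin n) :
    EU n d k k = Algebra.lmul ℚ (TP n d) fun w => (content n d w k : ℚ) := by
  refine LinearMap.ext fun f => funext fun w => ?_
  have update_self (p : Fin d) :
      (if w p = k then f (Function.update w p k) else 0) = if w p = k then f w else 0 := by
    split_ifs with hp
    · rw [← hp, Function.update_eq_self]
    · rfl
  calc EU n d k k f w
      = ∑ p, if w p = k then f (Function.update w p k) else 0 := rfl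
    _ = ∑ p, if w p = k then f w else 0 := Finset.sum_congr rfl fun p _ => update_self p
    _ = (content n d w k : ℚ) * f w := by
      rw [← Finset.sum_filter, Finset.sum_const, nsmul_eq_mul, content]

theorem sum_content (n d : ℕ) (w : Fin d → Fin n) : ∑ k, content n d w k = d := by
  simp [content, Finset.sum_card_fiberwise_eq_card_filter]

theorem prod_binomOp_EU_self_eq_lmul (n d : ℕ) (B : Fin n → ℕ) :
    (List.ofFn fun k => binomOp (EU n d k k) (B k)).prod =
      Algebra.lmul ℚ (TP n d) fun w => ((∏ k, (content n d w k).choose (B k) : ℕ) : ℚ) := by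
  simp only [EU_self_eq_lmul_content, binomOp_lmul_natCast]
  rw [← Function.comp_def (Algebra.lmul ℚ (TP n d)), ← List.map_ofFn, ← map_list_prod,
    List.prod_ofFn]
  congr 1
  funext w
  rw [Finset.prod_apply, Nat.cast_prod]

/-- For `B ∈ ℕ^n` with `|B| > d`, the operator `H_B = Π_k binom(H_k, b_k)` vanishes on
`V^{⊗d}`. -/
theorem HB_vanishes (n d : ℕ) (B : Fin n → ℕ) (hB : d < ∑ k, B k) :
    (List.ofFn (fun k : Fin n => binomOp (EU n d k k) (B k))).prod = 0 := by
  have choose_vanish (w : Fin d → Fin n) : ∏ k, (content n d w k).choose (B k) = 0 :=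
    prod_choose_eq_zero_of_sum_lt_sum (by rwa [sum_content])
  simp only [prod_binomOp_EU_self_eq_lmul, choose_vanish, Nat.cast_zero]
  exact map_zero (Algebra.lmul ℚ (TP n d))
end
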